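/- Let 𝕏 be a σ-finite measure space and ℳ, 𝒩 Banach L^0(𝕏)-modules. A pointwise norm |·|_c on ℳ ⊗ 𝒩 is a reasonable pointwise crossnorm if and only if |α|_ε ≤ |α|_c ≤ |α|_π for every α ∈ ℳ ⊗ 𝒩. -/

import Mathlib

/-!
By the triangle inequality, `c ≤ |·|_π` only has to be tested on elementary tensors, which is
condition (i). For condition (ii), let `dω` be the pointwise norm of a functional `ω`. With the
convention `0⁻¹ = 0`, the functional `dω⁻¹ ω` lies in the dual unit disc, and multiplying back by
`dω` recovers `ω`, since `|ω v| ≤ dω |v|` forces `ω v` to vanish where `dω` does. Hence the bound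
`|(ω ⊗ η) α| ≤ dω dη c(α)` only has to be tested on the unit discs, where it says `|α|_ε ≤ c(α)`.

The norms involved exist because `L⁰` is Dedekind complete: among the countable infima of members
of a family, one that minimises an integral is a lower bound of the whole family.
-/

open MeasureTheory Filter Set TensorProduct

noncomputable section

namespace Paper

variable {X : Type*} [MeasurableSpace X]

/-- The space `L⁰(𝕏)` of real-valued measurable functions up to `μ`-a.e. equality. -/
abbrev L0 (μ : Measure X) : Type _ := X →ₘ[μ] ℝ

instance (μ : Measure X) : CommRing (L0 μ) :=
  { (inferInstance : AddCommGroup (L0 μ)), (inferInstance : CommMonoid (L0 μ)) with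
    left_distrib := fun a b c => AEEqFun.toGerm_injective <| by
      simp only [AEEqFun.mul_toGerm, AEEqFun.add_toGerm, mul_add]
    right_distrib := fun a b c => AEEqFun.toGerm_injective <| by
      simp only [AEEqFun.mul_toGerm, AEEqFun.add_toGerm, add_mul]
    zero_mul := fun a => AEEqFun.toGerm_injective <| by
      simp only [AEEqFun.mul_toGerm, AEEqFun.zero_toGerm, zero_mul]
    mul_zero := fun a => AEEqFun.toGerm_injective <| by
      simp only [AEEqFun.mul_toGerm, AEEqFun.zero_toGerm, mul_zero] }

/-- The distance on `L⁰(𝕏)` inducing the topology of convergence in measure, defined through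
the auxiliary finite measure `μ.toFinite` (which satisfies `μ ≪ μ.toFinite ≪ μ`). -/
noncomputable def dL0 (μ : Measure X) [SFinite μ] (f g : L0 μ) : ℝ :=
  ∫ x, min |f x - g x| 1 ∂(μ.toFinite)

/-- A Banach `L⁰(𝕏)`-module: a module over `L⁰(𝕏)` endowed with a pointwise norm, complete
with respect to the induced distance. -/
class BanachMod (μ : Measure X) [SFinite μ] (M : Type*) [AddCommGroup M]
    [Module (L0 μ) M] where
  pn : M → L0 μ
  pn_nonneg : ∀ v : M, 0 ≤ pn v
  pn_eq_zero : ∀ v : M, pn v = 0 ↔ v = 0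
  pn_add_le : ∀ v w : M, pn (v + w) ≤ pn v + pn w
  pn_smul : ∀ (f : L0 μ) (v : M), pn (f • v) = |f| * pn v
  complete : ∀ u : ℕ → M,
    (∀ ε : ℝ, 0 < ε → ∃ N : ℕ, ∀ m ≥ N, ∀ n ≥ N, dL0 μ (pn (u m - u n)) 0 < ε) →
    ∃ v : M, Tendsto (fun n => dL0 μ (pn (u n - v)) 0) atTop (nhds 0)

/-- The pointwise norm of a Banach `L⁰(𝕏)`-module, with the measure explicit. -/
noncomputable def pn (μ : Measure X) [SFinite μ] {M : Type*} [AddCommGroup M]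
    [Module (L0 μ) M] [BanachMod μ M] (v : M) : L0 μ :=
  BanachMod.pn v

/-- The distance on a Banach `L⁰(𝕏)`-module. -/
noncomputable def dM (μ : Measure X) [SFinite μ] {M : Type*} [AddCommGroup M]
    [Module (L0 μ) M] [BanachMod μ M] (v w : M) : ℝ :=
  dL0 μ (pn μ (v - w)) 0

section Defs

variable (μ : Measure X) [SFinite μ]
variable {M N : Type*} [AddCommGroup M] [Module (L0 μ) M] [BanachMod μ M]
  [AddCommGroup N] [Module (L0 μ) N] [BanachMod μ N]

/-- The set of admissible bounds of a map between Banach `L⁰(𝕏)`-modules; the pointwise norm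
`|T|` of a homomorphism is the infimum of this set. -/
def homBddSet (T : M → N) : Set (L0 μ) :=
  {g | 0 ≤ g ∧ ∀ v, pn μ (T v) ≤ g * pn μ v}

/-- A homomorphism of Banach `L⁰(𝕏)`-modules: an `L⁰(𝕏)`-linear map admitting a bound
`g ∈ L⁰(𝕏)⁺` with `|T v| ≤ g |v|` (equivalently, `L⁰(𝕏)`-linear and continuous). -/
def IsHom (T : M →ₗ[L0 μ] N) : Prop :=
  ∃ g, g ∈ homBddSet μ (⇑T)

/-- The set of admissible bounds of an `L⁰(𝕏)`-valued map (for elements of the dual module). -/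
def dualBddSet (ω : M → L0 μ) : Set (L0 μ) :=
  {g | 0 ≤ g ∧ ∀ v, |ω v| ≤ g * pn μ v}

/-- Membership in the dual module `ℳ*`: an `L⁰(𝕏)`-linear map `ω : ℳ → L⁰(𝕏)` admitting a
bound `g ∈ L⁰(𝕏)⁺` with `|ω v| ≤ g |v|`. -/
def IsDual (ω : M →ₗ[L0 μ] L0 μ) : Prop :=
  ∃ g, g ∈ dualBddSet μ (⇑ω)

/-- Membership in the unit disc `𝔻_{ℳ*}` of the dual module: `|ω| ≤ 1`, equivalently
`|ω v| ≤ |v|` for every `v`. -/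
def InDualDisc (ω : M →ₗ[L0 μ] L0 μ) : Prop :=
  ∀ v, |ω v| ≤ pn μ v

/-- The family of pointwise norms `|s - ∑_{i ∈ F ∪ G} v i|` for `G` finite disjoint from `F`,
whose `F`-indexed inf-sup being `0` defines `s = ∑_{i∈I} v i`. -/
def sumUB {I : Type*} (v : I → M) (s : M) (F : Finset I) : Set (L0 μ) :=
  {g | ∃ G : Finset I, Disjoint G F ∧ g = pn μ (s - (∑ i ∈ F, v i + ∑ i ∈ G, v i))}

/-- `HasSumMod μ v s` means that the family `{v_i}` is summable in the Banach `L⁰(𝕏)`-module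
with sum `s`, i.e. `⋀_F ⋁_G |s - ∑_{i ∈ F ∪ G} v_i| = 0` (the inner suprema being the values
of `b`, and the outer infimum being `0`). -/
def HasSumMod {I : Type*} (v : I → M) (s : M) : Prop :=
  ∃ b : Finset I → L0 μ, (∀ F, IsLUB (sumUB μ v s F) (b F)) ∧ IsGLB (Set.range b) 0

/-- A family in a Banach `L⁰(𝕏)`-module is summable if it has a sum. -/
def SummableMod {I : Type*} (v : I → M) : Prop :=
  ∃ s, HasSumMod μ v s

/-- The partial sums `∑_{i ∈ F} |v i|` of the pointwise norms of a family; the element `|v|₁`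
of `ℓ₁(I, ℳ)` is the supremum of this set. -/
def l1PartialSums {I : Type*} (v : I → M) : Set (L0 μ) :=
  {g | ∃ F : Finset I, g = ∑ i ∈ F, pn μ (v i)}

/-- Membership in `ℓ₁(I, ℳ)`: the partial sums of the pointwise norms admit a supremum
(equivalently, an upper bound) in `L⁰(𝕏)`. -/
def Meml1 {I : Type*} (v : I → M) : Prop :=
  ∃ b, IsLUB (l1PartialSums μ v) b

/-- The partial sums `∑_{i ∈ F} |v i|` for an `L⁰(𝕏)`-valued family. -/
def l1PartialSumsF {I : Type*} (v : I → L0 μ) : Set (L0 μ) :=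
  {g | ∃ F : Finset I, g = ∑ i ∈ F, |v i|}

/-- Membership in `ℓ₁(I, L⁰(𝕏))`. -/
def Meml1F {I : Type*} (v : I → L0 μ) : Prop :=
  ∃ b, IsLUB (l1PartialSumsF μ v) b

/-- The set whose infimum defines the projective pointwise norm: all values
`∑_{i=1}^n |v_i||w_i|` over representations `α = ∑_{i=1}^n v_i ⊗ w_i`. -/
def piReps (α : M ⊗[L0 μ] N) : Set (L0 μ) :=
  {g | ∃ (n : ℕ) (v : Fin n → M) (w : Fin n → N),
    α = ∑ i, v i ⊗ₜ[L0 μ] w i ∧ g = ∑ i, pn μ (v i) * pn μ (w i)}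

/-- The set whose supremum defines the injective pointwise norm: all values
`|∑_{i=1}^n ω(v_i) η(w_i)|` over representations `α = ∑_{i=1}^n v_i ⊗ w_i` and elements
`ω ∈ 𝔻_{ℳ*}`, `η ∈ 𝔻_{𝒩*}`. -/
def epsReps (α : M ⊗[L0 μ] N) : Set (L0 μ) :=
  {g | ∃ (n : ℕ) (v : Fin n → M) (w : Fin n → N)
    (ω : M →ₗ[L0 μ] L0 μ) (η : N →ₗ[L0 μ] L0 μ), InDualDisc μ ω ∧ InDualDisc μ η ∧
    α = ∑ i, v i ⊗ₜ[L0 μ] w i ∧ g = |∑ i, ω (v i) * η (w i)|}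

/-- `IsPiTensor μ M N P e` states that the Banach `L⁰(𝕏)`-module `P`, together with the
`L⁰(𝕏)`-linear map `e` defined on the algebraic tensor product, realizes the projective
tensor product `ℳ ⊗̂_π 𝒩`: the pointwise norm of `e α` is the projective pointwise norm
`|α|_π` and the image of `e` is dense. -/
structure IsPiTensor (M N P : Type*) [AddCommGroup M] [Module (L0 μ) M] [BanachMod μ M]
    [AddCommGroup N] [Module (L0 μ) N] [BanachMod μ N]
    [AddCommGroup P] [Module (L0 μ) P] [BanachMod μ P]
    (e : M ⊗[L0 μ] N →ₗ[L0 μ] P) : Prop where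
  pn_emb : ∀ α : M ⊗[L0 μ] N, IsGLB (piReps μ α) (pn μ (e α))
  dense : ∀ p : P, ∀ ε : ℝ, 0 < ε → ∃ α : M ⊗[L0 μ] N, dM μ (e α) p < ε

/-- `IsEpsTensor μ M N P e` states that the Banach `L⁰(𝕏)`-module `P`, together with the
`L⁰(𝕏)`-linear map `e` defined on the algebraic tensor product, realizes the injective
tensor product `ℳ ⊗̂_ε 𝒩`: the pointwise norm of `e α` is the injective pointwise norm
`|α|_ε` and the image of `e` is dense. -/
structure IsEpsTensor (M N P : Type*) [AddCommGroup M] [Module (L0 μ) M] [BanachMod μ M]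
    [AddCommGroup N] [Module (L0 μ) N] [BanachMod μ N]
    [AddCommGroup P] [Module (L0 μ) P] [BanachMod μ P]
    (e : M ⊗[L0 μ] N →ₗ[L0 μ] P) : Prop where
  pn_emb : ∀ α : M ⊗[L0 μ] N, IsLUB (epsReps μ α) (pn μ (e α))
  dense : ∀ p : P, ∀ ε : ℝ, 0 < ε → ∃ α : M ⊗[L0 μ] N, dM μ (e α) p < ε

end Defs

/-! ### Pointwise norms over an ordered ring -/

section OrderedRing

variable {R M N : Type*} [CommRing R]

/-- The admissible bounds of an `R`-valued map `ω` relative to a gauge `p`, which plays the role of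
the pointwise norm of `M`. Their infimum is the pointwise dual norm of `ω`, and the dual unit disc
consists of the functionals that have `1` among their bounds. -/
def dualBounds [Lattice R] (p ω : M → R) : Set R :=
  {g | 0 ≤ g ∧ ∀ v, |ω v| ≤ g * p v}

lemma bddBelow_dualBounds [Lattice R] (p ω : M → R) : BddBelow (dualBounds p ω) :=
  ⟨0, fun _ hg => hg.1⟩

lemma one_mem_dualBounds_iff [Lattice R] [ZeroLEOneClass R] {p ω : M → R} :
    1 ∈ dualBounds p ω ↔ ∀ v, |ω v| ≤ p v := by
  simp [dualBounds]

variable [AddCommGroup M] [Module R M] [AddCommGroup N] [Module R N]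

lemma dualDistrib_smul_tmul_smul (a b : R) (ω : Module.Dual R M) (η : Module.Dual R N)
    (α : M ⊗[R] N) :
    dualDistrib R M N ((a • ω) ⊗ₜ (b • η)) α = a * b * dualDistrib R M N (ω ⊗ₜ η) α := by
  rw [TensorProduct.smul_tmul_smul, map_smul, LinearMap.smul_apply, smul_eq_mul]

lemma lift_mul_compl₁₂_eq_dualDistrib (ω : Module.Dual R M) (η : Module.Dual R N) :
    TensorProduct.lift ((LinearMap.mul R R).compl₁₂ ω η) = dualDistrib R M N (ω ⊗ₜ η) :=
  TensorProduct.ext' fun _ _ => rfl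

/-- The values `|(ω ⊗ η) α|`, for `ω` and `η` in the dual unit discs of the gauges `p` and `q`,
whose supremum is the injective pointwise norm of `α`. Unlike in `epsReps`, no representation of
`α` is chosen, since `(ω ⊗ η) α` does not depend on it. -/
def injectiveValues [Lattice R] (p : M → R) (q : N → R) (α : M ⊗[R] N) : Set R :=
  {g | ∃ (ω : Module.Dual R M) (η : Module.Dual R N),
    1 ∈ dualBounds p ω ∧ 1 ∈ dualBounds q η ∧ g = |dualDistrib R M N (ω ⊗ₜ η) α|}

/-- The values `∑ i, p (v i) * q (w i)` over the representations of `α`, whose infimum is the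
projective pointwise norm of `α` for the gauges `p` and `q`. -/
def projectiveValues (p : M → R) (q : N → R) (α : M ⊗[R] N) : Set R :=
  {g | ∃ (n : ℕ) (v : Fin n → M) (w : Fin n → N),
    α = ∑ i, v i ⊗ₜ[R] w i ∧ g = ∑ i, p (v i) * q (w i)}

lemma projectiveValues_nonempty (p : M → R) (q : N → R) (α : M ⊗[R] N) :
    (projectiveValues p q α).Nonempty := by
  obtain ⟨n, v, w, hα⟩ := TensorProduct.exists_sum_tmul_eq α
  exact ⟨_, n, v, w, hα, rfl⟩

section PartialOrder

variable [PartialOrder R]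

lemma forall_mem_lowerBounds_projectiveValues_iff [IsOrderedAddMonoid R] {p : M → R} {q : N → R}
    {c : M ⊗[R] N → R} (hc_zero : c 0 = 0) (hc_add : ∀ α β, c (α + β) ≤ c α + c β) :
    (∀ α, c α ∈ lowerBounds (projectiveValues p q α)) ↔
      ∀ v w, c (v ⊗ₜ[R] w) ≤ p v * q w := by
  refine ⟨fun h v w => h _ ⟨1, fun _ => v, fun _ => w, by simp, by simp⟩, fun h α => ?_⟩
  rintro _ ⟨n, v, w, rfl, rfl⟩
  exact (Finset.le_sum_of_subadditive c hc_zero.le hc_add _ _).trans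
    (Finset.sum_le_sum fun i _ => h _ _)

lemma bddBelow_projectiveValues [IsOrderedRing R] {p : M → R} {q : N → R} (hp : ∀ v, 0 ≤ p v)
    (hq : ∀ w, 0 ≤ q w) (α : M ⊗[R] N) : BddBelow (projectiveValues p q α) :=
  ⟨0, (forall_mem_lowerBounds_projectiveValues_iff (c := fun _ => 0) rfl (by simp)).2
    (fun v w => mul_nonneg (hp v) (hq w)) α⟩

end PartialOrder

lemma injectiveValues_nonempty [Lattice R] [IsOrderedRing R] {p : M → R} {q : N → R}
    (hp : ∀ v, 0 ≤ p v) (hq : ∀ w, 0 ≤ q w) (α : M ⊗[R] N) :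
    (injectiveValues p q α).Nonempty := by
  refine ⟨_, 0, 0, one_mem_dualBounds_iff.2 ?_, one_mem_dualBounds_iff.2 ?_, rfl⟩
  · simpa using hp
  · simpa using hq

end OrderedRing

namespace L0

/-! ### The ordered ring `L⁰` and its pointwise inverse -/

section Order

variable {μ : Measure X}

instance : IsOrderedAddMonoid (L0 μ) :=
  Function.Injective.isOrderedAddMonoid AEEqFun.toGerm AEEqFun.add_toGerm Iff.rfl

instance : ZeroLEOneClass (L0 μ) where
  zero_le_one := by
    rw [← AEEqFun.coeFn_le]
    filter_upwards [AEEqFun.coeFn_zero (β := ℝ) (μ := μ),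
      AEEqFun.coeFn_one (β := ℝ) (μ := μ)] with x h₀ h₁
    simp [h₀, h₁]

lemma nonneg_iff {f : L0 μ} : 0 ≤ f ↔ ∀ᵐ x ∂μ, 0 ≤ f x := by
  rw [← AEEqFun.coeFn_le]
  exact Filter.eventually_congr (AEEqFun.coeFn_zero.mono fun x hx => by rw [hx, Pi.zero_apply])

instance : IsOrderedRing (L0 μ) := .of_mul_nonneg fun f g hf hg => by
  rw [nonneg_iff] at hf hg ⊢
  filter_upwards [hf, hg, AEEqFun.coeFn_mul f g] with x hfx hgx hfg
  simpa [hfg] using mul_nonneg hfx hgx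

lemma abs_mul (f g : L0 μ) : |f * g| = |f| * |g| := by
  apply AEEqFun.ext
  filter_upwards [AEEqFun.coeFn_abs (f * g), AEEqFun.coeFn_mul f g, AEEqFun.coeFn_mul |f| |g|,
    AEEqFun.coeFn_abs f, AEEqFun.coeFn_abs g] with x h_abs_mul h_mul h_mul_abs hf hg
  simp [h_abs_mul, h_mul, h_mul_abs, hf, hg, _root_.abs_mul]

/-- The pointwise inverse of `f ∈ L⁰`, with value `0` where `f` vanishes. It serves to divide by
pointwise norms. -/
def pinv (f : L0 μ) : L0 μ := AEEqFun.compMeasurable (fun t : ℝ => t⁻¹) measurable_inv f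

lemma coeFn_pinv (f : L0 μ) : ⇑(pinv f) =ᵐ[μ] fun x => (f x)⁻¹ :=
  AEEqFun.coeFn_compMeasurable _ _ _

lemma pinv_nonneg {f : L0 μ} (hf : 0 ≤ f) : 0 ≤ pinv f := by
  rw [nonneg_iff] at hf ⊢
  filter_upwards [hf, coeFn_pinv f] with x hx h_inv
  simpa [h_inv] using hx

lemma mul_pinv_mul {f g h : L0 μ} (hgf : |g| ≤ f * h) : f * (pinv f * g) = g := by
  rw [← AEEqFun.coeFn_le] at hgf
  apply AEEqFun.ext
  filter_upwards [hgf, AEEqFun.coeFn_abs g, AEEqFun.coeFn_mul f h,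
    AEEqFun.coeFn_mul f (pinv f * g), AEEqFun.coeFn_mul (pinv f) g, coeFn_pinv f]
    with x hgfx h_abs h_mul h_lhs h_mul_pinv h_inv
  simp only [h_abs, h_mul, h_lhs, h_mul_pinv, h_inv, Pi.mul_apply] at hgfx ⊢
  rcases eq_or_ne (f x) 0 with hfx | hfx
  · simpa [hfx, eq_comm] using hgfx
  · exact mul_inv_cancel_left₀ hfx _

lemma pinv_mul_le {f g h : L0 μ} (hf : 0 ≤ f) (hh : 0 ≤ h) (hgf : g ≤ f * h) :
    pinv f * g ≤ h := by
  rw [nonneg_iff] at hf hh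
  rw [← AEEqFun.coeFn_le] at hgf ⊢
  filter_upwards [hf, hh, hgf, AEEqFun.coeFn_mul f h, AEEqFun.coeFn_mul (pinv f) g, coeFn_pinv f]
    with x hfx hhx hgfx h_mul h_mul_pinv h_inv
  simp only [h_mul, h_mul_pinv, h_inv, Pi.mul_apply] at hgfx ⊢
  exact inv_mul_le_of_le_mul₀ hfx hhx hgfx

end Order

end L0

/-! ### Dedekind completeness of `L⁰` -/

section Dedekind

open scoped ENNReal

/-- A countable subfamily whose infimum has least integral works: by merging countably many
countable subfamilies the least value is attained, and adjoining `f i` cannot decrease it. -/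
lemma exists_seq_forall_iInf_ae_le {ι : Type*} [Nonempty ι] {ν : Measure X} {f : ι → X → ℝ≥0∞}
    (hf : ∀ i, Measurable (f i)) (hfin : ∀ i, ∫⁻ x, f i x ∂ν ≠ ∞) :
    ∃ u : ℕ → ι, ∀ i, ∀ᵐ x ∂ν, ⨅ n, f (u n) x ≤ f i x := by
  let J (u : ℕ → ι) : ℝ≥0∞ := ∫⁻ x, ⨅ n, f (u n) x ∂ν
  obtain ⟨_, -, hJ_lim, hJ_mem⟩ :=
    exists_seq_tendsto_sInf (range_nonempty J) (OrderBot.bddBelow _)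
  choose u hu using hJ_mem
  let w (m : ℕ) : ι := u m.unpair.1 m.unpair.2
  have hw_min (w' : ℕ → ι) : J w ≤ J w' := by
    refine (ge_of_tendsto' hJ_lim fun k => ?_).trans (sInf_le (mem_range_self w'))
    rw [← hu k]
    refine lintegral_mono fun x => le_iInf fun n => iInf_le_of_le (Nat.pair k n) ?_
    simp [w]
  refine ⟨w, fun i => ?_⟩
  let w' (n : ℕ) : ι := n.casesOn i w
  have hw'_le (x : X) : ⨅ n, f (w' n) x ≤ ⨅ n, f (w n) x :=
    le_iInf fun n => iInf_le (fun n => f (w' n) x) (n + 1)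
  have hw'_fin : J w' ≠ ∞ :=
    ne_top_of_le_ne_top (hfin i) (lintegral_mono fun x => iInf_le (fun n => f (w' n) x) 0)
  filter_upwards [ae_eq_of_ae_le_of_lintegral_le (ae_of_all _ hw'_le) hw'_fin
    (Measurable.iInf fun n => hf (w n)).aemeasurable (hw_min w')] with x hx
  exact hx.symm.trans_le (iInf_le (fun n => f (w' n) x) 0)

namespace L0

variable {μ : Measure X} {S : Set (L0 μ)}

lemma ae_bddBelow_range (hS : BddBelow S) (u : ℕ → S) :
    ∀ᵐ x ∂μ, BddBelow (range fun n => (u n : L0 μ) x) := by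
  obtain ⟨l, hl⟩ := hS
  filter_upwards [ae_all_iff.2 fun n => AEEqFun.coeFn_le.2 (hl (u n).2)] with x hx
  exact ⟨l x, forall_mem_range.2 hx⟩

variable [SFinite μ]

lemma exists_seq_forall_iInf_ae_le (hne : S.Nonempty) (hS : BddBelow S) :
    ∃ u : ℕ → S, ∀ f ∈ S, ∀ᵐ x ∂μ, ⨅ n, (u n : L0 μ) x ≤ f x := by
  have : Nonempty S := hne.to_subtype
  -- A bounded strictly increasing reparametrisation makes all members integrable.
  let φ (t : ℝ) : ℝ≥0∞ := ENNReal.ofReal (Real.arctan t + Real.pi / 2)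
  have hφ : StrictMono φ := fun s t hst =>
    (ENNReal.ofReal_lt_ofReal_iff (by linarith [Real.neg_pi_div_two_lt_arctan t])).2
      (by linarith [Real.arctan_strictMono hst])
  have hφ_meas : Measurable φ := hφ.monotone.measurable
  have hφ_le (t : ℝ) : φ t ≤ ENNReal.ofReal Real.pi :=
    ENNReal.ofReal_le_ofReal (by linarith [Real.arctan_lt_pi_div_two t])
  obtain ⟨u, hu⟩ := Paper.exists_seq_forall_iInf_ae_le (ν := μ.toFinite)
    (f := fun (f : S) x => φ ((f : L0 μ) x))
    (fun f => hφ_meas.comp (AEEqFun.measurable (f : L0 μ))) fun f =>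
      ((lintegral_mono fun x => hφ_le _).trans_lt (by
        simpa using ENNReal.mul_lt_top ENNReal.ofReal_lt_top (measure_lt_top _ _))).ne
  refine ⟨u, fun f hf => ?_⟩
  filter_upwards [ae_toFinite (μ := μ) ▸ hu ⟨f, hf⟩, ae_bddBelow_range hS u] with x hx hbdd
  by_contra! hlt
  exact (hφ hlt).not_ge <| hx.trans' <| le_iInf fun n => hφ.monotone (ciInf_le hbdd n)

theorem exists_isGLB (hne : S.Nonempty) (hS : BddBelow S) : ∃ b, IsGLB S b := by
  obtain ⟨u, hu⟩ := exists_seq_forall_iInf_ae_le hne hS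
  have h_meas : Measurable fun x => ⨅ n, (u n : L0 μ) x :=
    Measurable.iInf fun n => AEEqFun.measurable _
  have h_coe := AEEqFun.coeFn_mk (μ := μ) _ h_meas.aestronglyMeasurable
  refine ⟨AEEqFun.mk _ h_meas.aestronglyMeasurable, fun f hf => ?_, fun l hl => ?_⟩ <;>
    rw [← AEEqFun.coeFn_le]
  · exact h_coe.trans_le (hu f hf)
  · filter_upwards [h_coe, ae_all_iff.2 fun n => AEEqFun.coeFn_le.2 (hl (u n).2)] with x hx hlx
    exact (le_ciInf hlx).trans_eq hx.symm

theorem exists_isLUB (hne : S.Nonempty) (hS : BddAbove S) : ∃ b, IsLUB S b := by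
  obtain ⟨b, hb⟩ := exists_isGLB hne.neg hS.neg
  exact ⟨-b, by simpa using hb.neg⟩

end L0

end Dedekind

/-! ### Functionals and crossnorms over `L⁰` -/

section Functional

variable {μ : Measure X} {M N : Type*}

lemma mem_dualBounds_of_isGLB {p ω : M → L0 μ} (hp : ∀ v, 0 ≤ p v)
    (hω : (dualBounds p ω).Nonempty) {d : L0 μ} (hd : IsGLB (dualBounds p ω) d) :
    d ∈ dualBounds p ω := by
  refine ⟨hd.2 fun g hg => hg.1, fun v => ?_⟩
  obtain ⟨g₀, hg₀⟩ := hω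
  have h_quot_le : L0.pinv (p v) * |ω v| ≤ d :=
    hd.2 fun g hg => L0.pinv_mul_le (hp v) hg.1 ((hg.2 v).trans_eq (mul_comm _ _))
  calc |ω v| = p v * (L0.pinv (p v) * |ω v|) :=
        (L0.mul_pinv_mul (by simpa [mul_comm] using hg₀.2 v)).symm
    _ ≤ p v * d := mul_le_mul_of_nonneg_left h_quot_le (hp v)
    _ = d * p v := mul_comm _ _

variable [AddCommGroup M] [Module (L0 μ) M] [AddCommGroup N] [Module (L0 μ) N]

lemma one_mem_dualBounds_pinv_smul {p : M → L0 μ} (hp : ∀ v, 0 ≤ p v)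
    {ω : Module.Dual (L0 μ) M} {d : L0 μ} (hd : d ∈ dualBounds p ω) :
    1 ∈ dualBounds p ⇑(L0.pinv d • ω) := by
  refine one_mem_dualBounds_iff.2 fun v => ?_
  rw [LinearMap.smul_apply, smul_eq_mul, L0.abs_mul, abs_of_nonneg (L0.pinv_nonneg hd.1)]
  exact L0.pinv_mul_le hd.1 (hp v) (hd.2 v)

lemma smul_pinv_smul {p : M → L0 μ} {ω : Module.Dual (L0 μ) M} {d : L0 μ}
    (hd : d ∈ dualBounds p ω) : d • L0.pinv d • ω = ω :=
  LinearMap.ext fun v => L0.mul_pinv_mul (hd.2 v)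

lemma bddAbove_injectiveValues {p : M → L0 μ} {q : N → L0 μ} (hp : ∀ v, 0 ≤ p v)
    (α : M ⊗[L0 μ] N) : BddAbove (injectiveValues p q α) := by
  obtain ⟨g, hg⟩ := projectiveValues_nonempty p q α
  refine ⟨g, ?_⟩
  rintro _ ⟨ω, η, hω, hη, rfl⟩
  rw [one_mem_dualBounds_iff] at hω hη
  refine (forall_mem_lowerBounds_projectiveValues_iff
    (c := fun β => |dualDistrib (L0 μ) M N (ω ⊗ₜ η) β|) (by simp)
    fun β γ => by simpa using abs_add_le _ _).2 (fun v w => ?_) α hg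
  rw [dualDistrib_apply, L0.abs_mul]
  exact mul_le_mul (hω v) (hη w) (abs_nonneg _) (hp v)

lemma mem_upperBounds_injectiveValues_iff [SFinite μ] {p : M → L0 μ} {q : N → L0 μ}
    (hp : ∀ v, 0 ≤ p v) (hq : ∀ w, 0 ≤ q w) {α : M ⊗[L0 μ] N} {t : L0 μ} (ht : 0 ≤ t) :
    t ∈ upperBounds (injectiveValues p q α) ↔
      ∀ (ω : Module.Dual (L0 μ) M) (η : Module.Dual (L0 μ) N),
        (dualBounds p ω).Nonempty → (dualBounds q η).Nonempty →
        ∀ dω dη, IsGLB (dualBounds p ω) dω → IsGLB (dualBounds q η) dη →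
          |dualDistrib (L0 μ) M N (ω ⊗ₜ η) α| ≤ dω * dη * t := by
  constructor
  · intro h ω η hω hη dω dη hdω hdη
    replace hdω := mem_dualBounds_of_isGLB hp hω hdω
    replace hdη := mem_dualBounds_of_isGLB hq hη hdη
    have hd : 0 ≤ dω * dη := mul_nonneg hdω.1 hdη.1
    calc |dualDistrib (L0 μ) M N (ω ⊗ₜ η) α|
        = dω * dη * |dualDistrib (L0 μ) M N ((L0.pinv dω • ω) ⊗ₜ (L0.pinv dη • η)) α| := by
          rw [← abs_of_nonneg hd, ← L0.abs_mul, ← dualDistrib_smul_tmul_smul,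
            smul_pinv_smul hdω, smul_pinv_smul hdη]
      _ ≤ dω * dη * t := mul_le_mul_of_nonneg_left
          (h ⟨_, _, one_mem_dualBounds_pinv_smul hp hdω, one_mem_dualBounds_pinv_smul hq hdη, rfl⟩)
          hd
  · rintro h _ ⟨ω, η, hω, hη, rfl⟩
    obtain ⟨dω, hdω⟩ := L0.exists_isGLB ⟨1, hω⟩ (bddBelow_dualBounds p ω)
    obtain ⟨dη, hdη⟩ := L0.exists_isGLB ⟨1, hη⟩ (bddBelow_dualBounds q η)
    have hd_le : dω * dη ≤ 1 :=
      mul_le_one₀ (hdω.1 hω) (hdη.2 fun g hg => hg.1) (hdη.1 hη)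
    exact (h ω η ⟨1, hω⟩ ⟨1, hη⟩ dω dη hdω hdη).trans (mul_le_of_le_one_left ht hd_le)

theorem reasonable_crossnorm_characterisation_general [SFinite μ] {p : M → L0 μ} {q : N → L0 μ}
    (hp : ∀ v, 0 ≤ p v) (hq : ∀ w, 0 ≤ q w) {c : M ⊗[L0 μ] N → L0 μ} (hc_nonneg : ∀ α, 0 ≤ c α)
    (hc_zero : c 0 = 0) (hc_add : ∀ α β, c (α + β) ≤ c α + c β) :
    ((∀ v w, c (v ⊗ₜ[L0 μ] w) ≤ p v * q w)
      ∧ (∀ (ω : Module.Dual (L0 μ) M) (η : Module.Dual (L0 μ) N),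
          (dualBounds p ω).Nonempty → (dualBounds q η).Nonempty →
          ∀ dω dη, IsGLB (dualBounds p ω) dω → IsGLB (dualBounds q η) dη →
          ∀ α, |dualDistrib (L0 μ) M N (ω ⊗ₜ η) α| ≤ dω * dη * c α))
    ↔ ((∀ α b, IsLUB (injectiveValues p q α) b → b ≤ c α)
        ∧ (∀ α b, IsGLB (projectiveValues p q α) b → c α ≤ b)) := by
  rw [← forall_mem_lowerBounds_projectiveValues_iff hc_zero hc_add]
  constructor
  · rintro ⟨hπ, hε⟩
    refine ⟨fun α b hb => hb.2 ?_, fun α b hb => hb.2 (hπ α)⟩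
    exact (mem_upperBounds_injectiveValues_iff hp hq (hc_nonneg α)).2
      fun ω η hω hη dω dη hdω hdη => hε ω η hω hη dω dη hdω hdη α
  · rintro ⟨hε, hπ⟩
    refine ⟨fun α => ?_, fun ω η hω hη dω dη hdω hdη α => ?_⟩
    · obtain ⟨b, hb⟩ :=
        L0.exists_isGLB (projectiveValues_nonempty p q α) (bddBelow_projectiveValues hp hq α)
      exact fun g hg => (hπ α b hb).trans (hb.1 hg)
    · obtain ⟨b, hb⟩ :=
        L0.exists_isLUB (injectiveValues_nonempty hp hq α) (bddAbove_injectiveValues hp α)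
      exact (mem_upperBounds_injectiveValues_iff hp hq (hc_nonneg α)).1
        (fun g hg => (hb.1 hg).trans (hε α b hb)) ω η hω hη dω dη hdω hdη

end Functional

lemma epsReps_eq_injectiveValues (μ : Measure X) [SFinite μ] {M N : Type*}
    [AddCommGroup M] [Module (L0 μ) M] [BanachMod μ M]
    [AddCommGroup N] [Module (L0 μ) N] [BanachMod μ N] (α : M ⊗[L0 μ] N) :
    epsReps μ α = injectiveValues (pn μ) (pn μ) α := by
  ext g
  simp only [epsReps, injectiveValues, one_mem_dualBounds_iff, mem_ofPred_eq]
  constructor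
  · rintro ⟨n, v, w, ω, η, hω, hη, rfl, rfl⟩
    exact ⟨ω, η, hω, hη, by simp⟩
  · rintro ⟨ω, η, hω, hη, rfl⟩
    obtain ⟨n, v, w, rfl⟩ := TensorProduct.exists_sum_tmul_eq α
    exact ⟨n, v, w, ω, η, hω, hη, rfl, by simp⟩

/-- characterisation of reasonable pointwise crossnorms. A pointwise norm
`c` on `ℳ ⊗ 𝒩` is a reasonable pointwise crossnorm — that is, (i) `c(v ⊗ w) ≤ |v||w|`, and
(ii) for all `ω ∈ ℳ*`, `η ∈ 𝒩*`, the functional `ω ⊗ η` is continuous w.r.t. `c` with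
`|ω ⊗ η|_{c*} ≤ |ω||η|` (equivalently `|((ω ⊗ η))(α)| ≤ |ω||η| · c(α)` for all `α`) — if and
only if `|α|_ε ≤ c(α) ≤ |α|_π` for every `α ∈ ℳ ⊗ 𝒩`. -/
theorem reasonable_crossnorm_characterisation
    (μ : Measure X) [SigmaFinite μ]
    (M : Type*) [AddCommGroup M] [Module (L0 μ) M] [BanachMod μ M]
    (N : Type*) [AddCommGroup N] [Module (L0 μ) N] [BanachMod μ N]
    (c : M ⊗[L0 μ] N → L0 μ)
    (hc_nonneg : ∀ α, 0 ≤ c α) (hc_zero : ∀ α, c α = 0 ↔ α = 0)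
    (hc_add : ∀ α β, c (α + β) ≤ c α + c β)
    (hc_smul : ∀ (f : L0 μ) (α : M ⊗[L0 μ] N), c (f • α) = |f| * c α) :
    ((∀ (v : M) (w : N), c (v ⊗ₜ[L0 μ] w) ≤ pn μ v * pn μ w)
      ∧ (∀ (ω : M →ₗ[L0 μ] L0 μ) (η : N →ₗ[L0 μ] L0 μ), IsDual μ ω → IsDual μ η →
          ∀ dω dη : L0 μ, IsGLB (dualBddSet μ ⇑ω) dω → IsGLB (dualBddSet μ ⇑η) dη →
          ∀ α : M ⊗[L0 μ] N,
            |TensorProduct.lift ((LinearMap.mul (L0 μ) (L0 μ)).compl₁₂ ω η) α| ≤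
              dω * dη * c α))
    ↔ ((∀ (α : M ⊗[L0 μ] N) (b : L0 μ), IsLUB (epsReps μ α) b → b ≤ c α)
        ∧ (∀ (α : M ⊗[L0 μ] N) (b : L0 μ), IsGLB (piReps μ α) b → c α ≤ b)) := by
  simp only [lift_mul_compl₁₂_eq_dualDistrib, epsReps_eq_injectiveValues]
  exact reasonable_crossnorm_characterisation_general BanachMod.pn_nonneg BanachMod.pn_nonneg
    hc_nonneg ((hc_zero 0).2 rfl) hc_add

end Paper
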